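/- For any two agents with additive valuations over a finite set M of indivisible items, there exists a finite probability distribution over allocations, each of which is EF1, under which every item is allocated to agent 1 with probability exactly 1/2 and to agent 2 with probability exactly 1/2; that is, the equal-division fractional allocation for two agents is EF1-realizable. -/

import Mathlib

open Finset

/-- `A` is an ordered partition of the item set `M` into `n` bundles. -/
def IsPartition {ι : Type*} [DecidableEq ι] {n : ℕ} (M : Finset ι)
    (A : Fin n → Finset ι) : Prop :=
  (∀ i, A i ⊆ M) ∧ (∀ i j, i ≠ j → Disjoint (A i) (A j)) ∧ (∀ g ∈ M, ∃ i, g ∈ A i)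

/-- The allocation `A` of the items `M` is EF^{+u}_{-w} for the additive valuations `v`. -/
def EFpm {ι : Type*} [DecidableEq ι] {n : ℕ} (M : Finset ι) (v : Fin n → ι → ℝ)
    (A : Fin n → Finset ι) (u w : ℕ) : Prop :=
  ∀ i j : Fin n, ∃ Si Sj : Finset ι,
    Si ⊆ M ∧ Disjoint Si (A i) ∧ Si.card ≤ u ∧
    Sj ⊆ A j ∧ Sj.card ≤ w ∧
    ∑ g ∈ A j \ Sj, v i g ≤ ∑ g ∈ A i ∪ Si, v i g

/-!
Let each agent sort the items by value and cut the sorted list into consecutive rounds of two. The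
two resulting perfect matchings together form a disjoint union of even cycles, so the items can be
coloured with two colours in such a way that each round of each agent contains both colours. For
either agent and either colour, dropping the item of that colour in the first round leaves items
which are dominated, round by round, by the items of the other colour one round earlier. Hence both
ways of handing the two colour classes to the two agents are EF1, and a fair coin chooses between
them. An odd number of items is accommodated by padding with worthless ones.
-/

open Function Equiv

section EnvyFreeness

variable {ι R : Type*}

/-- An agent with item values `f` who holds the bundle `A` is envy-free up to one item towards
the holder of the bundle `B`. -/
def EnvyFreeUpToOne [DecidableEq ι] [AddCommMonoid R] [LE R] (f : ι → R) (A B : Finset ι) : Prop :=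
  ∃ S ⊆ B, #S ≤ 1 ∧ ∑ x ∈ B \ S, f x ≤ ∑ x ∈ A, f x

lemma efpm_zero_one_of_envyFreeUpToOne [DecidableEq ι] {n : ℕ} {M : Finset ι} {v : Fin n → ι → ℝ}
    {A : Fin n → Finset ι} (h : ∀ i j, EnvyFreeUpToOne (v i) (A i) (A j)) : EFpm M v A 0 1 := by
  intro i j
  obtain ⟨S, hSA, hS, hle⟩ := h i j
  exact ⟨∅, S, empty_subset M, disjoint_empty_left _, le_rfl, hSA, hS, by rwa [union_empty]⟩

lemma EnvyFreeUpToOne.toLeft {κ : Type*} [DecidableEq ι] [DecidableEq κ] [AddCommMonoid R] [LE R]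
    {f : ι → R} {A B : Finset (ι ⊕ κ)} (h : EnvyFreeUpToOne (Sum.elim f 0) A B) :
    EnvyFreeUpToOne f A.toLeft B.toLeft := by
  obtain ⟨S, hSB, hS, hle⟩ := h
  refine ⟨S.toLeft, toLeft_subset_toLeft hSB, card_toLeft_le.trans hS, ?_⟩
  simpa [sum_sum_eq_sum_toLeft_add_sum_toRight, toLeft_sdiff] using hle

lemma envyFreeUpToOne_map_of_forall_lt [DecidableEq ι] [AddCommMonoid R] [PartialOrder R]
    [IsOrderedAddMonoid R] {n : ℕ} {f : ι → R} (hf : ∀ x, 0 ≤ f x) {p q : Fin n ↪ ι}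
    (h : ∀ ⦃k l⦄, k < l → f (q l) ≤ f (p k)) :
    EnvyFreeUpToOne f (univ.map p) (univ.map q) := by
  rcases n with _ | n
  · exact ⟨∅, by simp, by simp, by simp⟩
  have drop_first : univ.map q \ {q 0} = univ.map ((Fin.succEmb n).trans q) := by
    rw [sdiff_singleton_eq_erase, Fin.univ_succ, map_cons, erase_cons, map_map]
    rfl
  refine ⟨{q 0}, by simp, by simp, ?_⟩
  calc ∑ x ∈ univ.map q \ {q 0}, f x = ∑ k : Fin n, f (q k.succ) := by
        rw [drop_first, sum_map]; rfl
    _ ≤ ∑ k : Fin n, f (p k.castSucc) := sum_le_sum fun k _ => h k.castSucc_lt_succ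
    _ ≤ ∑ k : Fin n, f (p k.castSucc) + f (p (Fin.last n)) := le_add_of_nonneg_right (hf _)
    _ = ∑ x ∈ univ.map p, f x := by rw [sum_map, Fin.sum_univ_castSucc]

end EnvyFreeness

section Rounds

variable {ι κ γ ρ R : Type*} {n : ℕ}

/-- The arrangement `e` of the items into `n` rounds, where `e (k, a)` is the item in slot `a` of
round `k`, is sorted by value: each item is worth at least as much as every item of a later round.
Nothing is required within a round. -/
def IsSortedByRound [LE R] (f : ι → R) (e : Fin n × κ ≃ ι) : Prop :=
  ∀ ⦃k l⦄, k < l → ∀ a b, f (e (l, b)) ≤ f (e (k, a))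

lemma exists_isSortedByRound [Fintype ι] [LinearOrder R] (f : ι → R) {m : ℕ}
    (hcard : Fintype.card ι = n * m) : ∃ e : Fin n × Fin m ≃ ι, IsSortedByRound f e := by
  let e₀ := (Fintype.equivFinOfCardEq hcard).symm
  let g : Fin (n * m) → Rᵒᵈ := fun k => OrderDual.toDual (f (e₀ k))
  refine ⟨finProdFinEquiv.trans ((Tuple.sort g).trans e₀), fun k l hkl a b => ?_⟩
  have position_le : finProdFinEquiv (k, a) ≤ finProdFinEquiv (l, b) := by
    have : m * (k + 1) ≤ m * l := Nat.mul_le_mul_left m hkl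
    simp only [Fin.le_def, finProdFinEquiv_apply_val]
    lia
  exact Tuple.monotone_sort g position_le

lemma exists_transversal_of_bijective {e : ρ × κ ≃ ι} {c : ι → γ}
    (hc : ∀ k, Bijective fun a => c (e (k, a))) (b : γ) :
    ∃ p : ρ ↪ ι, (∀ k, ∃ a, p k = e (k, a)) ∧ ∀ x, c x = b ↔ ∃ k, p k = x := by
  choose slot h_slot using fun k => (hc k).surjective b
  refine ⟨⟨fun k => e (k, slot k), fun k l hkl => congrArg Prod.fst (e.injective hkl)⟩,
    fun k => ⟨slot k, rfl⟩, fun x => ⟨fun hx => ?_, ?_⟩⟩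
  · obtain ⟨⟨k, a⟩, rfl⟩ := e.surjective x
    obtain rfl : slot k = a := (hc k).injective ((h_slot k).trans hx.symm)
    exact ⟨k, rfl⟩
  · rintro ⟨k, rfl⟩
    exact h_slot k

lemma IsSortedByRound.envyFreeUpToOne_filter [Fintype ι] [DecidableEq ι] [DecidableEq γ]
    [AddCommMonoid R] [PartialOrder R] [IsOrderedAddMonoid R] {f : ι → R} {e : Fin n × κ ≃ ι}
    (he : IsSortedByRound f e) (hf : ∀ x, 0 ≤ f x) {c : ι → γ}
    (hc : ∀ k, Bijective fun a => c (e (k, a))) (a b : γ) :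
    EnvyFreeUpToOne f {x | c x = a} {x | c x = b} := by
  obtain ⟨p, hp, hpa⟩ := exists_transversal_of_bijective hc a
  obtain ⟨q, hq, hqb⟩ := exists_transversal_of_bijective hc b
  have class_a : ({x | c x = a} : Finset ι) = univ.map p := by ext x; simp [hpa]
  have class_b : ({x | c x = b} : Finset ι) = univ.map q := by ext x; simp [hqb]
  rw [class_a, class_b]
  refine envyFreeUpToOne_map_of_forall_lt hf fun k l hkl => ?_
  obtain ⟨s, hs⟩ := hp k
  obtain ⟨t, ht⟩ := hq l
  rw [hs, ht]
  exact he hkl s t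

/-- For an arrangement of the items into rounds of two, the involution exchanging the two items
of each round. -/
def roundSwap (e : ρ × Fin 2 ≃ ι) : Perm ι :=
  e.permCongr ((Equiv.refl ρ).prodCongr (Equiv.addRight 1))

@[simp]
lemma roundSwap_apply (e : ρ × Fin 2 ≃ ι) (k : ρ) (a : Fin 2) :
    roundSwap e (e (k, a)) = e (k, a + 1) := by
  simp [roundSwap]

lemma involutive_roundSwap (e : ρ × Fin 2 ≃ ι) : Involutive (roundSwap e) := by
  intro x
  obtain ⟨⟨k, a⟩, rfl⟩ := e.surjective x
  fin_cases a <;> simp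

lemma roundSwap_ne (e : ρ × Fin 2 ≃ ι) (x : ι) : roundSwap e x ≠ x := by
  obtain ⟨⟨k, a⟩, rfl⟩ := e.surjective x
  simp

lemma bijective_of_semiconj_roundSwap {e : ρ × Fin 2 ≃ ι} {c : ι → Fin 2}
    (hc : Semiconj c (roundSwap e) (· + 1)) (k : ρ) : Bijective fun a => c (e (k, a)) := by
  have h_add : (fun a => c (e (k, a))) = (c (e (k, 0)) + ·) := by
    funext a
    fin_cases a
    · simp
    · simpa using hc (e (k, 0))
  rw [h_add]
  exact AddGroup.addLeft_bijective _

end Rounds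

section Coloring

variable {ι : Type*} {s t : Perm ι}

lemma apply_mul_zpow_apply_of_involutive (hs : Involutive s) (ht : Involutive t) (k : ℤ) (x : ι) :
    s (((s * t) ^ k) x) = ((s * t) ^ (-k)) (s x) := by
  have h_inv : (s * t)⁻¹ = t * s :=
    inv_eq_of_mul_eq_one_right <| by ext x; simp [hs.eq_iff, ht.eq_iff]
  have h_conj : SemiconjBy s (s * t) (s * t)⁻¹ := by
    rw [h_inv]
    ext x
    simp [hs _]
  simpa only [inv_zpow', Perm.mul_apply] using Equiv.congr_fun (h_conj.zpow_right k) x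

lemma not_sameCycle_mul_apply_of_involutive (hs : Involutive s) (ht : Involutive t)
    (hs_ne : ∀ x, s x ≠ x) (ht_ne : ∀ x, t x ≠ x) (x : ι) : ¬ (s * t).SameCycle x (s x) := by
  rintro ⟨k, hk⟩
  have reflect (j : ℤ) : s (((s * t) ^ j) x) = ((s * t) ^ (k - j)) x := by
    rw [apply_mul_zpow_apply_of_involutive hs ht, ← hk, ← Perm.mul_apply, ← zpow_add,
      neg_add_eq_sub]
  obtain ⟨j, rfl | rfl⟩ := k.even_or_odd'
  · exact hs_ne (((s * t) ^ j) x) (by rw [reflect]; congr 2; ring)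
  · refine ht_ne (((s * t) ^ j) x) (s.injective ?_)
    rw [reflect, show 2 * j + 1 - j = 1 + j by ring, zpow_one_add]
    rfl

/-- The cycles of `s * t` come in pairs exchanged by both `s` and `t`; comparing the two members
of a pair in any linear order selects one of them. -/
lemma exists_semiconj_add_one_of_involutive (hs : Involutive s) (ht : Involutive t)
    (hs_ne : ∀ x, s x ≠ x) (ht_ne : ∀ x, t x ≠ x) :
    ∃ c : ι → Fin 2, Semiconj c s (· + 1) ∧ Semiconj c t (· + 1) := by
  let cycles := Perm.SameCycle.setoid (s * t)
  let _ : LinearOrder (Quotient cycles) := IsWellOrder.linearOrder WellOrderingRel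
  let q : ι → Quotient cycles := Quotient.mk cycles
  have q_ne (x : ι) : q x ≠ q (s x) := fun h =>
    not_sameCycle_mul_apply_of_involutive hs ht hs_ne ht_ne x (Quotient.exact h)
  have q_st (x : ι) : q (s (t x)) = q x :=
    Quotient.sound (Perm.sameCycle_apply_left.2 (Perm.SameCycle.refl _ x))
  have q_t (x : ι) : q (t x) = q (s x) := by rw [← q_st (t x), ht]
  have flip {a b : Quotient cycles} (hab : a ≠ b) :
      (if b < a then (0 : Fin 2) else 1) = (if a < b then 0 else 1) + 1 := by
    rcases hab.lt_or_gt with h | h <;> simp [h, h.not_gt]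
  refine ⟨fun x => if q x < q (s x) then 0 else 1, fun x => ?_, fun x => ?_⟩
  · simp only [hs x, flip (q_ne x)]
  · simp only [q_t, q_st, flip (q_ne x)]

variable {R : Type*} [Fintype ι] [DecidableEq ι] [AddCommMonoid R] [LinearOrder R]
  [IsOrderedAddMonoid R] {f : Fin 2 → ι → R}

lemma exists_envyFreeUpToOne_coloring_of_even_card (hf : ∀ i x, 0 ≤ f i x)
    (hcard : Even (Fintype.card ι)) :
    ∃ c : ι → Fin 2, ∀ i a b, EnvyFreeUpToOne (f i) {x | c x = a} {x | c x = b} := by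
  obtain ⟨n, hn⟩ := hcard.exists_two_nsmul
  choose e he using fun i => exists_isSortedByRound (f i) (hn.trans (mul_comm 2 n))
  obtain ⟨c, hc₀, hc₁⟩ := exists_semiconj_add_one_of_involutive
    (involutive_roundSwap (e 0)) (involutive_roundSwap (e 1))
    (roundSwap_ne (e 0)) (roundSwap_ne (e 1))
  have hc : ∀ i, Semiconj c (roundSwap (e i)) (· + 1) := Fin.forall_fin_two.2 ⟨hc₀, hc₁⟩
  exact ⟨c, fun i => (he i).envyFreeUpToOne_filter (hf i) (bijective_of_semiconj_roundSwap (hc i))⟩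

lemma exists_envyFreeUpToOne_coloring (hf : ∀ i x, 0 ≤ f i x) :
    ∃ c : ι → Fin 2, ∀ i a b, EnvyFreeUpToOne (f i) {x | c x = a} {x | c x = b} := by
  obtain ⟨c, hc⟩ := exists_envyFreeUpToOne_coloring_of_even_card (ι := ι ⊕ ι)
    (f := fun i => Sum.elim (f i) 0) (fun i => Sum.forall.2 ⟨hf i, fun _ => le_rfl⟩) (by simp)
  refine ⟨c ∘ Sum.inl, fun i a b => ?_⟩
  convert (hc i a b).toLeft using 1 <;> ext x <;> simp

end Coloring

section Rotation

variable {ι : Type*} [Fintype ι] {n : ℕ}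

/-- The `k`-th rotation of the allocation given by the colouring `c` of the items: agent `i`
receives the items of colour `k + i`, where addition is modulo `n`. -/
def rotatedAllocation (c : ι → Fin n) (k i : Fin n) : Finset ι := {x | c x = k + i}

lemma isPartition_rotatedAllocation [DecidableEq ι] [NeZero n] (c : ι → Fin n) (k : Fin n) :
    IsPartition univ (rotatedAllocation c k) := by
  refine ⟨fun i => subset_univ _, fun i j hij => ?_,
    fun g _ => ⟨c g - k, by simp [rotatedAllocation]⟩⟩
  refine disjoint_filter.2 fun x _ hi hj => hij ?_
  exact add_left_cancel (hi.symm.trans hj)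

lemma sum_ite_mem_rotatedAllocation [DecidableEq ι] [NeZero n] {R : Type*} [AddCommMonoid R]
    (c : ι → Fin n) (i : Fin n) (g : ι) (r : R) :
    ∑ k, (if g ∈ rotatedAllocation c k i then r else 0) = r := by
  simp [rotatedAllocation, ← sub_eq_iff_eq_add]

end Rotation

theorem equal_division_EF1_realizable_two_agents_general {ι : Type*} [Fintype ι] [DecidableEq ι]
    (v : Fin 2 → ι → ℝ) (hv : ∀ i g, 0 ≤ v i g) :
    ∃ (K : ℕ) (p : Fin K → ℝ) (A : Fin K → Fin 2 → Finset ι),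
      (∀ k, 0 ≤ p k) ∧ (∑ k, p k = 1) ∧
      (∀ k, IsPartition Finset.univ (A k)) ∧
      (∀ k, EFpm Finset.univ v (A k) 0 1) ∧
      (∀ i g, ∑ k, (if g ∈ A k i then p k else 0) = 1 / 2) := by
  obtain ⟨c, hc⟩ := exists_envyFreeUpToOne_coloring hv
  have ef1 (k : Fin 2) : EFpm univ v (rotatedAllocation c k) 0 1 :=
    efpm_zero_one_of_envyFreeUpToOne fun i j => hc i (k + i) (k + j)
  exact ⟨2, fun _ => 1 / 2, rotatedAllocation c, fun _ => by norm_num, by norm_num,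
    isPartition_rotatedAllocation c, ef1, fun i g => sum_ite_mem_rotatedAllocation c i g _⟩

/-- For two agents with additive valuations, the equal-division fractional allocation is
EF1-realizable: there is a finite probability distribution over EF1 allocations under which
every item goes to each agent with probability exactly 1/2. -/
theorem equal_division_EF1_realizable_two_agents {m : ℕ}
    (v : Fin 2 → Fin m → ℝ) (hv : ∀ i g, 0 ≤ v i g) :
    ∃ (K : ℕ) (p : Fin K → ℝ) (A : Fin K → Fin 2 → Finset (Fin m)),
      (∀ k, 0 ≤ p k) ∧ (∑ k, p k = 1) ∧
      (∀ k, IsPartition Finset.univ (A k)) ∧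
      (∀ k, EFpm Finset.univ v (A k) 0 1) ∧
      (∀ i g, ∑ k, (if g ∈ A k i then p k else 0) = 1 / 2) :=
  equal_division_EF1_realizable_two_agents_general v hv
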